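/- Let τ > 0, ζ₀ > 0, d₀ > 0, d₁ > 0, t ≥ 1, and set ζ₁ = ζ₀ d₀/d₁, s = (d₀/d₁)^{3/4}. Let T₁, …, T_Q be symmetric positive-definite 3×3 real matrices with tr(T_j)/3 ∈ [d₀, t d₀] for every j, and let F₁, …, F_M : ℝ³ \ {0} → ℝ be bounded measurable functions homogeneous of degree 0. For a scale ζ > 0 and a tensor T define the coefficient vector a(T, ζ) ∈ ℝ^{(N+1)M} with entries a(T, ζ)_{n,k} = ∫_{ℝ³} exp(−4π²τ qᵀ T q) G_n(‖q‖|ζ) F_k(q) dq for 0 ≤ n ≤ N, 1 ≤ k ≤ M. Fix ε₀ > 0 and set ε₁ = s ε₀. Then the rescaled tensors T'_j = (d₁/d₀) T_j satisfy tr(T'_j)/3 ∈ [d₁, t d₁], and for every real (N+1)M × K matrix D, Σ_{j=1}^Q inf { ‖c‖₁ : ‖D c − a(T'_j, ζ₁)‖₂ ≤ ε₁ } = s · Σ_{j=1}^Q inf { ‖c‖₁ : ‖D c − a(T_j, ζ₀)‖₂ ≤ ε₀ }. Consequently, a matrix D₀ minimizes the left-hand objective over all (N+1)M × K matrices D if and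 only if it minimizes the right-hand objective. -/

import Mathlib

open Real Matrix
open scoped ENNReal

/-- The generalized Laguerre polynomial of order `1/2`:
`L_n^{1/2}(x) = Σ_{k=0}^n (−1)^k [Γ(n+3/2)/(Γ(k+3/2)(n−k)! k!)] x^k`. -/
noncomputable def genLaguerreHalf (n : ℕ) (x : ℝ) : ℝ :=
  ∑ k ∈ Finset.range (n + 1),
    (-1 : ℝ) ^ k *
      (Real.Gamma ((n : ℝ) + 3 / 2) /
        (Real.Gamma ((k : ℝ) + 3 / 2) * (Nat.factorial (n - k)) * (Nat.factorial k))) *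
      x ^ k

/-- The SPF radial basis function
`G_n(q|ζ) = [ (2/ζ^{3/2}) · n!/Γ(n+3/2) ]^{1/2} · exp(−q²/(2ζ)) · L_n^{1/2}(q²/ζ)`. -/
noncomputable def spfG (n : ℕ) (q ζ : ℝ) : ℝ :=
  Real.sqrt (2 / ζ ^ ((3 : ℝ) / 2) * (Nat.factorial n) / Real.Gamma ((n : ℝ) + 3 / 2)) *
    Real.exp (-q ^ 2 / (2 * ζ)) * genLaguerreHalf n (q ^ 2 / ζ)

/-- The ℓ¹-norm of a finitely indexed real vector. -/
def l1norm {ι : Type*} [Fintype ι] (x : ι → ℝ) : ℝ := ∑ i, |x i|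

/-- The Euclidean (ℓ²) norm of a finitely indexed real vector. -/
noncomputable def l2norm {ι : Type*} [Fintype ι] (x : ι → ℝ) : ℝ :=
  Real.sqrt (∑ i, x i ^ 2)

/-- The SPF coefficient vector `a(T, ζ)` of the single-tensor signal
`E(q) = exp(−4π²τ qᵀTq)`: entries
`a(T,ζ)_{n,k} = ∫_{ℝ³} exp(−4π²τ qᵀTq) Gₙ(‖q‖|ζ) F_k(q) dq`. -/
noncomputable def spfCoeff {M : ℕ} (N : ℕ) (τ : ℝ)
    (F : Fin M → EuclideanSpace ℝ (Fin 3) → ℝ)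
    (T : Matrix (Fin 3) (Fin 3) ℝ) (ζ : ℝ) : Fin (N + 1) × Fin M → ℝ :=
  fun nk => ∫ q : EuclideanSpace ℝ (Fin 3),
    Real.exp (-(4 * π ^ 2 * τ * ((q : Fin 3 → ℝ) ⬝ᵥ T.mulVec q))) *
      spfG nk.1 ‖q‖ ζ * F nk.2 q

/-- The dictionary-learning objective
`Σⱼ inf { ‖c‖₁ : ‖D c − aⱼ‖₂ ≤ ε }` (infima in the extended reals). -/
noncomputable def dlObjective {ι : Type*} [Fintype ι] {K Q : ℕ}
    (D : Matrix ι (Fin K) ℝ) (ε : ℝ) (a : Fin Q → ι → ℝ) : ℝ≥0∞ :=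
  ∑ j, ⨅ c ∈ {c : Fin K → ℝ | l2norm (D.mulVec c - a j) ≤ ε},
    ENNReal.ofReal (l1norm c)

/-!
The substitution `q ↦ r q` with `r = √(d₀/d₁)` leaves the rescaled signal and the degree-0 factors
`F k` unchanged, while `G_n(r q | r²ζ) = r^{-3/2} G_n(q|ζ)`. With the Jacobian `r³`, every SPF
coefficient is therefore multiplied by `r^{3/2} = (d₀/d₁)^{3/4} = s`. Scaling the codes by `s` then
identifies the two sparse coding problems, with all costs multiplied by `s`.
-/

section LinearAlgebra

variable {n : Type*} [Fintype n]

lemma trace_smul_div_mem_Icc {A : Matrix n n ℝ} {m a b c : ℝ}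
    (hc : 0 ≤ c) (hA : A.trace / m ∈ Set.Icc a b) :
    (c • A).trace / m ∈ Set.Icc (c * a) (c * b) := by
  rw [trace_smul, smul_eq_mul, mul_div_assoc]
  exact ⟨mul_le_mul_of_nonneg_left hA.1 hc, mul_le_mul_of_nonneg_left hA.2 hc⟩

lemma smul_dotProduct_inv_sq_smul_mulVec_smul (A : Matrix n n ℝ) (v : n → ℝ) {r : ℝ}
    (hr : r ≠ 0) :
    (r • v) ⬝ᵥ ((r ^ 2)⁻¹ • A) *ᵥ (r • v) = v ⬝ᵥ A *ᵥ v := by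
  simp only [smul_mulVec, mulVec_smul, smul_dotProduct, dotProduct_smul, smul_eq_mul]
  field_simp

end LinearAlgebra

section Dilation

open MeasureTheory

lemma spfG_mul_sq_mul (n : ℕ) (q : ℝ) {ζ r : ℝ} (hζ : 0 < ζ) (hr : 0 < r) :
    spfG n (r * q) (r ^ 2 * ζ) = (r ^ (3 / 2 : ℝ))⁻¹ * spfG n q ζ := by
  have hexp : -(r * q) ^ 2 / (2 * (r ^ 2 * ζ)) = -q ^ 2 / (2 * ζ) := by field_simp
  have harg : (r * q) ^ 2 / (r ^ 2 * ζ) = q ^ 2 / ζ := by field_simp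
  have hpow : (r ^ 2 * ζ) ^ (3 / 2 : ℝ) = (r ^ (3 / 2 : ℝ)) ^ 2 * ζ ^ (3 / 2 : ℝ) := by
    rw [mul_rpow (sq_nonneg r) hζ.le, rpow_pow_comm hr.le]
  have hnorm : 2 / ((r ^ (3 / 2 : ℝ)) ^ 2 * ζ ^ (3 / 2 : ℝ)) * n.factorial / Gamma (n + 3 / 2) =
      ((r ^ (3 / 2 : ℝ))⁻¹) ^ 2 * (2 / ζ ^ (3 / 2 : ℝ) * n.factorial / Gamma (n + 3 / 2)) := by
    rw [← div_div]
    ring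
  unfold spfG
  rw [hexp, harg, hpow, hnorm, sqrt_mul (sq_nonneg _), sqrt_sq (by positivity)]
  ring

lemma spfCoeff_inv_sq_smul_sq_mul {M : ℕ} (N : ℕ) (τ : ℝ)
    {F : Fin M → EuclideanSpace ℝ (Fin 3) → ℝ} (T : Matrix (Fin 3) (Fin 3) ℝ) {ζ r : ℝ}
    (hζ : 0 < ζ) (hr : 0 < r) (hF : ∀ k, ∀ q ≠ 0, F k (r • q) = F k q) :
    spfCoeff N τ F ((r ^ 2)⁻¹ • T) (r ^ 2 * ζ) = r ^ (3 / 2 : ℝ) • spfCoeff N τ F T ζ := by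
  funext ⟨n, k⟩
  let f (A : Matrix (Fin 3) (Fin 3) ℝ) (η : ℝ) (q : EuclideanSpace ℝ (Fin 3)) : ℝ :=
    exp (-(4 * π ^ 2 * τ * (q.ofLp ⬝ᵥ A *ᵥ q.ofLp))) * spfG n ‖q‖ η * F k q
  have hf : ∀ q ≠ 0,
      f ((r ^ 2)⁻¹ • T) (r ^ 2 * ζ) (r • q) = (r ^ (3 / 2 : ℝ))⁻¹ * f T ζ q := by
    intro q hq
    simp only [f]
    rw [WithLp.ofLp_smul, smul_dotProduct_inv_sq_smul_mulVec_smul T _ hr.ne', norm_smul,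
      norm_of_nonneg hr.le, spfG_mul_sq_mul _ _ hζ hr, hF k q hq]
    ring
  have hcube : r ^ 3 = r ^ (3 / 2 : ℝ) * r ^ (3 / 2 : ℝ) := by
    rw [← rpow_add hr, ← rpow_natCast]
    norm_num
  calc ∫ q, f ((r ^ 2)⁻¹ • T) (r ^ 2 * ζ) q
      = r ^ 3 * ∫ q, f ((r ^ 2)⁻¹ • T) (r ^ 2 * ζ) (r • q) := by
        rw [Measure.integral_comp_smul_of_nonneg _ _ _ (hR := hr.le), finrank_euclideanSpace_fin,
          smul_eq_mul, mul_inv_cancel_left₀ (pow_pos hr 3).ne']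
    _ = r ^ 3 * ∫ q, (r ^ (3 / 2 : ℝ))⁻¹ * f T ζ q := by
        congr 1
        exact integral_congr_ae ((Measure.ae_ne volume 0).mono hf)
    _ = r ^ (3 / 2 : ℝ) * ∫ q, f T ζ q := by
        rw [integral_const_mul, hcube, mul_assoc,
          mul_inv_cancel_left₀ (rpow_pos_of_pos hr _).ne']

lemma spfCoeff_inv_smul_mul {M : ℕ} (N : ℕ) (τ : ℝ)
    {F : Fin M → EuclideanSpace ℝ (Fin 3) → ℝ} (T : Matrix (Fin 3) (Fin 3) ℝ) {ζ c : ℝ}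
    (hζ : 0 < ζ) (hc : 0 < c) (hF : ∀ k, ∀ q ≠ 0, F k (√c • q) = F k q) :
    spfCoeff N τ F (c⁻¹ • T) (c * ζ) = c ^ (3 / 4 : ℝ) • spfCoeff N τ F T ζ := by
  have hpow : √c ^ (3 / 2 : ℝ) = c ^ (3 / 4 : ℝ) := by
    rw [sqrt_eq_rpow, ← rpow_mul hc.le]
    norm_num
  simpa only [sq_sqrt hc.le, hpow] using
    spfCoeff_inv_sq_smul_sq_mul N τ T hζ (sqrt_pos.2 hc) hF

end Dilation

section SparseCoding

variable {ι κ : Type*} [Fintype ι] [Fintype κ]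

lemma l1norm_smul (s : ℝ) (x : ι → ℝ) : l1norm (s • x) = |s| * l1norm x := by
  simp only [l1norm, Pi.smul_apply, smul_eq_mul, abs_mul, Finset.mul_sum]

lemma l2norm_smul (s : ℝ) (x : ι → ℝ) : l2norm (s • x) = |s| * l2norm x := by
  simp only [l2norm, Pi.smul_apply, smul_eq_mul, mul_pow, ← Finset.mul_sum]
  rw [sqrt_mul (sq_nonneg s), sqrt_sq_eq_abs]

/-- The least `ℓ¹`-norm of a code reconstructing `a` from the dictionary `D` up to an `ℓ²`-error
of `ε`, i.e. one summand of `dlObjective`; it is `∞` if no such code exists. -/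
noncomputable def sparseCost (D : Matrix ι κ ℝ) (ε : ℝ) (a : ι → ℝ) : ℝ≥0∞ :=
  ⨅ c ∈ {c : κ → ℝ | l2norm (D *ᵥ c - a) ≤ ε}, ENNReal.ofReal (l1norm c)

lemma l2norm_mulVec_smul_sub_smul_le_iff (D : Matrix ι κ ℝ) (ε : ℝ) (a : ι → ℝ) (c : κ → ℝ)
    {s : ℝ} (hs : 0 < s) :
    l2norm (D *ᵥ (s • c) - s • a) ≤ s * ε ↔ l2norm (D *ᵥ c - a) ≤ ε := by
  rw [mulVec_smul, ← smul_sub, l2norm_smul, abs_of_pos hs, mul_le_mul_iff_right₀ hs]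

lemma sparseCost_smul (D : Matrix ι κ ℝ) (ε : ℝ) (a : ι → ℝ) {s : ℝ} (hs : 0 < s) :
    sparseCost D (s * ε) (s • a) = ENNReal.ofReal s * sparseCost D ε a := by
  have hs₀ : ENNReal.ofReal s ≠ 0 := (ENNReal.ofReal_pos.2 hs).ne'
  calc sparseCost D (s * ε) (s • a)
      = ⨅ c : κ → ℝ, ⨅ _ : l2norm (D *ᵥ (s • c) - s • a) ≤ s * ε,
          ENNReal.ofReal (l1norm (s • c)) := ((MulAction.surjective₀ hs.ne').iInf_comp _).symm
    _ = ⨅ c : κ → ℝ, ⨅ _ : l2norm (D *ᵥ c - a) ≤ ε,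
          ENNReal.ofReal s * ENNReal.ofReal (l1norm c) := by
        simp only [l2norm_mulVec_smul_sub_smul_le_iff D ε a _ hs, l1norm_smul, abs_of_pos hs,
          ENNReal.ofReal_mul hs.le]
    _ = ENNReal.ofReal s * sparseCost D ε a := by
        simp only [sparseCost, ENNReal.mul_iInf_of_ne hs₀ ENNReal.ofReal_ne_top, Set.mem_ofPred_eq]

lemma dlObjective_smul {K Q : ℕ} (D : Matrix ι (Fin K) ℝ) (ε : ℝ) (a : Fin Q → ι → ℝ) {s : ℝ}
    (hs : 0 < s) :
    dlObjective D (s * ε) (fun j => s • a j) = ENNReal.ofReal s * dlObjective D ε a := by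
  change ∑ j, sparseCost D (s * ε) (s • a j) = ENNReal.ofReal s * ∑ j, sparseCost D ε (a j)
  simp only [sparseCost_smul D ε _ hs, Finset.mul_sum]

end SparseCoding

theorem optimal_dictionary_rescale_general (τ ζ₀ d₀ d₁ : ℝ)
    (hζ₀ : 0 < ζ₀) (hd₀ : 0 < d₀) (hd₁ : 0 < d₁)
    (ζ₁ : ℝ) (hζ₁ : ζ₁ = ζ₀ * d₀ / d₁)
    (s : ℝ) (hs : s = (d₀ / d₁) ^ ((3 : ℝ) / 4))
    (N M Q K : ℕ)
    (T : Fin Q → Matrix (Fin 3) (Fin 3) ℝ)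
    (F : Fin M → EuclideanSpace ℝ (Fin 3) → ℝ)
    (hFmeas : ∀ k, Measurable (F k))
    (hFhom : ∀ k, ∀ lam : ℝ, 0 < lam → ∀ q : EuclideanSpace ℝ (Fin 3), q ≠ 0 →
      F k (lam • q) = F k q)
    (ε₀ ε₁ : ℝ) (hε₁ : ε₁ = s * ε₀) :
    (∀ t j, (T j).trace / 3 ∈ Set.Icc d₀ (t * d₀) →
      ((d₁ / d₀) • T j).trace / 3 ∈ Set.Icc d₁ (t * d₁)) ∧
    (∀ D : Matrix (Fin (N + 1) × Fin M) (Fin K) ℝ,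
      dlObjective D ε₁ (fun j => spfCoeff N τ F ((d₁ / d₀) • T j) ζ₁) =
        ENNReal.ofReal s * dlObjective D ε₀ (fun j => spfCoeff N τ F (T j) ζ₀)) ∧
    (∀ D₀ : Matrix (Fin (N + 1) × Fin M) (Fin K) ℝ,
      (∀ D : Matrix (Fin (N + 1) × Fin M) (Fin K) ℝ,
          dlObjective D₀ ε₁ (fun j => spfCoeff N τ F ((d₁ / d₀) • T j) ζ₁) ≤
            dlObjective D ε₁ (fun j => spfCoeff N τ F ((d₁ / d₀) • T j) ζ₁)) ↔
        (∀ D : Matrix (Fin (N + 1) × Fin M) (Fin K) ℝ,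
          dlObjective D₀ ε₀ (fun j => spfCoeff N τ F (T j) ζ₀) ≤
            dlObjective D ε₀ (fun j => spfCoeff N τ F (T j) ζ₀))) := by
  have hc : 0 < d₀ / d₁ := div_pos hd₀ hd₁
  have hs_pos : 0 < s := hs ▸ rpow_pos_of_pos hc _
  have hζ : ζ₁ = d₀ / d₁ * ζ₀ := by rw [hζ₁]; ring
  have hcoeff (j : Fin Q) :
      spfCoeff N τ F ((d₁ / d₀) • T j) ζ₁ = s • spfCoeff N τ F (T j) ζ₀ := by
    rw [hζ, hs, ← inv_div d₀ d₁]
    exact spfCoeff_inv_smul_mul N τ (T j) hζ₀ hc fun k => hFhom k _ (sqrt_pos.2 hc)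
  have hobj (D : Matrix (Fin (N + 1) × Fin M) (Fin K) ℝ) :
      dlObjective D ε₁ (fun j => spfCoeff N τ F ((d₁ / d₀) • T j) ζ₁) =
        ENNReal.ofReal s * dlObjective D ε₀ (fun j => spfCoeff N τ F (T j) ζ₀) := by
    simp only [hcoeff, hε₁, dlObjective_smul D ε₀ _ hs_pos]
  refine ⟨fun t j hT => ?_, hobj, fun D₀ => forall_congr' fun D => ?_⟩
  · have hmd := trace_smul_div_mem_Icc (div_pos hd₁ hd₀).le hT
    rwa [mul_left_comm, div_mul_cancel₀ d₁ hd₀.ne'] at hmd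
  · rw [hobj, hobj]
    exact ENNReal.mul_le_mul_iff_right (ENNReal.ofReal_pos.2 hs_pos).ne' ENNReal.ofReal_ne_top

/-- **Optimal Dictionary (Theorem 3).**
Rescaling the tensors by `d₁/d₀` while rescaling the SPF scale to
`ζ₁ = ζ₀d₀/d₁` and the fitting threshold to `ε₁ = sε₀` with `s = (d₀/d₁)^{3/4}`
keeps the mean diffusivities in `[d₁, td₁]` and multiplies the
dictionary-learning objective by `s`; consequently `D₀` is optimal for the
rescaled problem iff it is optimal for the original problem. -/
theorem optimal_dictionary_rescale (τ ζ₀ d₀ d₁ t : ℝ)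
    (hτ : 0 < τ) (hζ₀ : 0 < ζ₀) (hd₀ : 0 < d₀) (hd₁ : 0 < d₁) (ht : 1 ≤ t)
    (ζ₁ : ℝ) (hζ₁ : ζ₁ = ζ₀ * d₀ / d₁)
    (s : ℝ) (hs : s = (d₀ / d₁) ^ ((3 : ℝ) / 4))
    (N M Q K : ℕ)
    (T : Fin Q → Matrix (Fin 3) (Fin 3) ℝ)
    (hTsymm : ∀ j, (T j).IsSymm) (hTpos : ∀ j, (T j).PosDef)
    (hTmd : ∀ j, (T j).trace / 3 ∈ Set.Icc d₀ (t * d₀))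
    (F : Fin M → EuclideanSpace ℝ (Fin 3) → ℝ)
    (hFmeas : ∀ k, Measurable (F k))
    (hFbdd : ∀ k, ∃ C : ℝ, ∀ q, |F k q| ≤ C)
    (hFhom : ∀ k, ∀ lam : ℝ, 0 < lam → ∀ q : EuclideanSpace ℝ (Fin 3), q ≠ 0 →
      F k (lam • q) = F k q)
    (ε₀ : ℝ) (hε₀ : 0 < ε₀) (ε₁ : ℝ) (hε₁ : ε₁ = s * ε₀) :
    (∀ j, ((d₁ / d₀) • T j).trace / 3 ∈ Set.Icc d₁ (t * d₁)) ∧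
    (∀ D : Matrix (Fin (N + 1) × Fin M) (Fin K) ℝ,
      dlObjective D ε₁ (fun j => spfCoeff N τ F ((d₁ / d₀) • T j) ζ₁) =
        ENNReal.ofReal s * dlObjective D ε₀ (fun j => spfCoeff N τ F (T j) ζ₀)) ∧
    (∀ D₀ : Matrix (Fin (N + 1) × Fin M) (Fin K) ℝ,
      (∀ D : Matrix (Fin (N + 1) × Fin M) (Fin K) ℝ,
          dlObjective D₀ ε₁ (fun j => spfCoeff N τ F ((d₁ / d₀) • T j) ζ₁) ≤
            dlObjective D ε₁ (fun j => spfCoeff N τ F ((d₁ / d₀) • T j) ζ₁)) ↔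
        (∀ D : Matrix (Fin (N + 1) × Fin M) (Fin K) ℝ,
          dlObjective D₀ ε₀ (fun j => spfCoeff N τ F (T j) ζ₀) ≤
            dlObjective D ε₀ (fun j => spfCoeff N τ F (T j) ζ₀))) := by
  have ⟨hmd, hobj, hopt⟩ := optimal_dictionary_rescale_general τ ζ₀ d₀ d₁ hζ₀ hd₀ hd₁ ζ₁ hζ₁ s hs
    N M Q K T F hFmeas hFhom ε₀ ε₁ hε₁
  exact ⟨fun j => hmd t j (hTmd j), hobj, hopt⟩
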